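/- Let r, m ∈ ℕ, let ℕ = E_1 ∪ … ∪ E_r, and for each i ∈ {1,…,m} let A_i be a u_i×v_i image partition regular matrix over (ℕ,+) with u_i, v_i ∈ ℕ. Then there exist k ∈ {1,…,r}, vectors x^(i), y^(i) ∈ ℕ^{v_i} for i ∈ {1,…,m}, and a sequence {z_t}_{t=1}^∞ in ℕ such that: all entries of A_i x^(i) lie in E_k for each i ∈ {1,…,m}; P(A_1y^(1), A_2y^(2), …, A_my^(m)) ⊆ E_k; and PS_m({z_t}_{t=1}^∞) ⊆ E_k. -/

import Mathlib

/- `ℕ+` plays the role of the paper's `ℕ = {1,2,3,…}`.  `Ultrafilter ℕ+` is `βℕ`. -/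

/-- Product of ultrafilters: `U ∈ umul p q ↔ {x | {y | x*y ∈ U} ∈ q} ∈ p`. -/
def umul (p q : Ultrafilter ℕ+) : Ultrafilter ℕ+ :=
  p.bind fun x => q.map fun y => x * y

/-- Sum of ultrafilters: `U ∈ uadd p q ↔ {x | {y | x+y ∈ U} ∈ q} ∈ p`. -/
def uadd (p q : Ultrafilter ℕ+) : Ultrafilter ℕ+ :=
  p.bind fun x => q.map fun y => x + y

/-- The matrix-vector product `Ax` (computed in `ℚ`) of a row-finite matrix `A`
with a vector `x` of positive integers. -/
noncomputable def mulVecQ {ι κ : Type} (A : ι → κ → ℚ) (x : κ → ℕ+) : ι → ℚ :=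
  fun i => ∑ᶠ j, A i j * ((x j : ℕ) : ℚ)

/-- All entries of the vector `y` are (positive) natural numbers lying in `P`. -/
def entriesIn {ι : Type} (y : ι → ℚ) (P : Set ℕ+) : Prop :=
  ∀ i, ∃ n ∈ P, y i = ((n : ℕ) : ℚ)

/-- `A` is image partition regular: for every finite coloring of `ℕ` there is
a vector `x` over `ℕ` all entries of whose image `Ax` are monochromatic. -/
def IPR {ι κ : Type} (A : ι → κ → ℚ) : Prop :=
  ∀ (r : ℕ) (c : ℕ+ → Fin r), ∃ (k : Fin r) (x : κ → ℕ+),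
    entriesIn (mulVecQ A x) {n | c n = k}

/-- `I(A) = {p ∈ βℕ : for every P ∈ p there is x over ℕ with all entries of Ax in P}`. -/
def ISet {ι κ : Type} (A : ι → κ → ℚ) : Set (Ultrafilter ℕ+) :=
  {p | ∀ P ∈ p, ∃ x : κ → ℕ+, entriesIn (mulVecQ A x) P}

/-- `PSm m x` is `PS_m({x_t})`: all products `∏_{i=1}^m ∑_{t ∈ F_i} x_t` where
`F_1, …, F_m` are finite nonempty subsets of the index set with
`max F_i < min F_{i+1}`. -/
def PSm (m : ℕ) (x : ℕ → ℕ+) : Set ℕ+ :=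
  {z | ∃ F : Fin m → Finset ℕ,
    (∀ i, (F i).Nonempty) ∧
    (∀ i j : Fin m, i < j → ∀ a ∈ F i, ∀ b ∈ F j, a < b) ∧
    (z : ℕ) = ∏ i, ∑ t ∈ F i, (x t : ℕ)}

section helpers

open Filter

lemma mulVecQ_eq {a b : ℕ} (A : Fin a → Fin b → ℚ) (x : Fin b → ℕ+) (i : Fin a) :
    mulVecQ A x i = ∑ j, A i j * ((x j : ℕ) : ℚ) := by
  simp [mulVecQ, finsum_eq_sum_of_fintype]

lemma mulVecQ_smul {a b : ℕ} (A : Fin a → Fin b → ℚ) (x : Fin b → ℕ+) (c : ℕ+) (i : Fin a) :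
    mulVecQ A (fun j => c * x j) i = ((c : ℕ) : ℚ) * mulVecQ A x i := by
  rw [mulVecQ_eq, mulVecQ_eq, Finset.mul_sum]
  refine Finset.sum_congr rfl fun j _ => ?_
  push_cast
  ring

lemma mulVecQ_add {a b : ℕ} (A : Fin a → Fin b → ℚ) (x y : Fin b → ℕ+) (i : Fin a) :
    mulVecQ A (fun j => x j + y j) i = mulVecQ A x i + mulVecQ A y i := by
  rw [mulVecQ_eq, mulVecQ_eq, mulVecQ_eq, ← Finset.sum_add_distrib]
  refine Finset.sum_congr rfl fun j _ => ?_
  push_cast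
  ring

lemma entriesIn_mono {ι : Type} {y : ι → ℚ} {P Q : Set ℕ+} (h : entriesIn y P) (hPQ : P ⊆ Q) :
    entriesIn y Q := fun i => by
  obtain ⟨n, hn, e⟩ := h i
  exact ⟨n, hPQ hn, e⟩

lemma ISet_nonempty {a b : ℕ} (A : Fin a → Fin b → ℚ) (hA : IPR A) : (ISet A).Nonempty := by
  classical
  let S : Set (Set ℕ+) := {B | ¬ ∃ x : Fin b → ℕ+, entriesIn (mulVecQ A x) Bᶜ}
  have hne : (Filter.generate S).NeBot := by
    rw [Filter.generate_neBot_iff]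
    intro t htS htf
    by_contra hemp
    rw [Set.not_nonempty_iff_eq_empty] at hemp
    have hcov : ∀ n : ℕ+, ∃ B : t, n ∉ B.1 := by
      intro n
      have : n ∉ ⋂₀ t := by rw [hemp]; simp
      simpa [Set.mem_sInter] using this
    choose c hc using hcov
    haveI : Fintype t := htf.fintype
    let e := Fintype.equivFin t
    obtain ⟨k, x, hx⟩ := hA _ (fun n => e (c n))
    refine htS (e.symm k).2 ⟨x, entriesIn_mono hx ?_⟩
    intro n hn
    have hn' : e (c n) = k := hn
    have : c n = e.symm k := by rw [← hn']; simp
    rw [← this]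
    exact hc n
  refine ⟨Ultrafilter.of (Filter.generate S), fun P hP => ?_⟩
  by_contra hbad
  have h1 : Pᶜ ∈ Filter.generate S := Filter.mem_generate_of_mem (by
    change ¬ _
    rwa [compl_compl])
  have h2 : Pᶜ ∈ Ultrafilter.of (Filter.generate S) := Ultrafilter.of_le _ h1
  exact (Ultrafilter.compl_mem_iff_notMem.mp h2) hP

lemma ISet_isClosed {a b : ℕ} (A : Fin a → Fin b → ℚ) : IsClosed (ISet A) := by
  have : ISet A = ⋂ (P : Set ℕ+) (_ : ¬ ∃ x : Fin b → ℕ+, entriesIn (mulVecQ A x) P),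
      {p : Ultrafilter ℕ+ | Pᶜ ∈ p} := by
    ext p
    simp only [ISet, Set.mem_setOf_eq, Set.mem_iInter, Ultrafilter.compl_mem_iff_notMem]
    exact ⟨fun h P hP hm => hP (h P hm), fun h P hP => by
      by_contra hb
      exact h P hb hP⟩
  rw [this]
  exact isClosed_iInter fun P => isClosed_iInter fun _ => ultrafilter_isClosed_basic _

lemma mem_umul (p q : Ultrafilter ℕ+) (P : Set ℕ+) :
    P ∈ umul p q ↔ ∀ᶠ x in p, ∀ᶠ y in q, x * y ∈ P := Iff.rfl

lemma mem_uadd (p q : Ultrafilter ℕ+) (P : Set ℕ+) :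
    P ∈ uadd p q ↔ ∀ᶠ x in p, ∀ᶠ y in q, x + y ∈ P := Iff.rfl

lemma ISet_umul_left {a b : ℕ} (A : Fin a → Fin b → ℚ) {p : Ultrafilter ℕ+} (q : Ultrafilter ℕ+)
    (hp : p ∈ ISet A) : umul p q ∈ ISet A := by
  intro P hP
  rw [mem_umul] at hP
  obtain ⟨x, hx⟩ := hp _ hP
  choose n hn e using hx
  obtain ⟨y, hy⟩ := (eventually_all.mpr hn).exists
  refine ⟨fun j => y * x j, fun i => ⟨n i * y, hy i, ?_⟩⟩
  rw [mulVecQ_smul, e]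
  push_cast
  ring

lemma ISet_umul_right {a b : ℕ} (A : Fin a → Fin b → ℚ) {q : Ultrafilter ℕ+} (p : Ultrafilter ℕ+)
    (hq : q ∈ ISet A) : umul p q ∈ ISet A := by
  intro P hP
  rw [mem_umul] at hP
  obtain ⟨c, hc⟩ := hP.exists
  obtain ⟨x, hx⟩ := hq _ hc
  refine ⟨fun j => c * x j, fun i => ?_⟩
  obtain ⟨n, hn, e⟩ := hx i
  refine ⟨c * n, hn, ?_⟩
  rw [mulVecQ_smul, e]
  push_cast
  ring

lemma ISet_uadd {a b : ℕ} (A : Fin a → Fin b → ℚ) {p q : Ultrafilter ℕ+}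
    (hp : p ∈ ISet A) (hq : q ∈ ISet A) : uadd p q ∈ ISet A := by
  intro P hP
  rw [mem_uadd] at hP
  obtain ⟨x, hx⟩ := hp _ hP
  choose n hn e using hx
  obtain ⟨y, hy⟩ := hq _ (eventually_all.mpr hn)
  refine ⟨fun j => x j + y j, fun i => ?_⟩
  obtain ⟨k, hk, e'⟩ := hy i
  refine ⟨n i + k, hk i, ?_⟩
  rw [mulVecQ_add, e, e']
  push_cast
  ring

lemma ISet_inter_nonempty : ∀ (m : ℕ) (u v : Fin m → ℕ)
    (A : ∀ i, Fin (u i) → Fin (v i) → ℚ) (_ : ∀ i, IPR (A i)),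
    ∃ p : Ultrafilter ℕ+, ∀ i, p ∈ ISet (A i)
  | 0, _, _, _, _ => ⟨pure 1, fun i => i.elim0⟩
  | m + 1, u, v, A, hA => by
    obtain ⟨p, hp⟩ := ISet_inter_nonempty m (fun i => u i.succ) (fun i => v i.succ)
      (fun i => A i.succ) (fun i => hA i.succ)
    obtain ⟨p0, hp0⟩ := ISet_nonempty (A 0) (hA 0)
    refine ⟨umul p0 p, fun i => ?_⟩
    refine Fin.cases ?_ (fun i => ?_) i
    · exact ISet_umul_left _ _ hp0
    · exact ISet_umul_right _ _ (hp i)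

lemma exists_uidem (m : ℕ) (u v : Fin m → ℕ)
    (A : ∀ i, Fin (u i) → Fin (v i) → ℚ) (hA : ∀ i, IPR (A i)) :
    ∃ q : Ultrafilter ℕ+, (∀ i, q ∈ ISet (A i)) ∧ uadd q q = q := by
  letI : AddSemigroup (Ultrafilter ℕ+) := Ultrafilter.addSemigroup
  have hadd : ∀ p q : Ultrafilter ℕ+, p + q = uadd p q := by
    intro p q
    apply Ultrafilter.ext
    intro P
    rw [mem_uadd]
    exact Ultrafilter.eventually_add p q (· ∈ P)
  obtain ⟨q, hq, e⟩ := exists_idempotent_in_compact_add_subsemigroup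
    (M := Ultrafilter ℕ+) Ultrafilter.continuous_add_left (⋂ i, ISet (A i))
    (by
      obtain ⟨p, hp⟩ := ISet_inter_nonempty m u v A hA
      exact ⟨p, Set.mem_iInter.mpr hp⟩)
    (isClosed_iInter fun i => ISet_isClosed _).isCompact
    (by
      intro p hp q hq
      rw [Set.mem_iInter] at *
      intro i
      rw [hadd]
      exact ISet_uadd _ (hp i) (hq i))
  exact ⟨q, Set.mem_iInter.mp hq, by rw [← hadd]; exact e⟩

/-- `Rq q P k a`: the set `P` belongs to `a * q^k`. -/
def Rq (q : Ultrafilter ℕ+) (P : Set ℕ+) : ℕ → ℕ+ → Prop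
  | 0, a => a ∈ P
  | k + 1, a => ∀ᶠ x in q, Rq q P k (a * x)

lemma Rq_color (q : Ultrafilter ℕ+) {r : ℕ} (E : Fin r → Set ℕ+) (hE : ∀ n : ℕ+, ∃ i, n ∈ E i) :
    ∀ (k : ℕ) (a : ℕ+), ∃ i, Rq q (E i) k a
  | 0, a => hE a
  | k + 1, a => by
    by_contra h
    push Not at h
    have h2 : ∀ i, ∀ᶠ x in q, ¬ Rq q (E i) k (a * x) := fun i =>
      Ultrafilter.eventually_not.mpr (h i)
    obtain ⟨x, hx⟩ := (eventually_all.mpr h2).exists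
    obtain ⟨i, hi⟩ := Rq_color q E hE k (a * x)
    exact hx i hi

lemma Rq_entries {a b : ℕ} (A : Fin a → Fin b → ℚ) {q : Ultrafilter ℕ+} (hq : q ∈ ISet A)
    (P : Set ℕ+) : ∀ (k : ℕ) (c : ℕ+), Rq q P (k + 1) c →
      ∃ x : Fin b → ℕ+, entriesIn (mulVecQ A x) P
  | 0, c, h => by
    obtain ⟨x, hx⟩ := hq _ h
    refine ⟨fun j => c * x j, fun i => ?_⟩
    obtain ⟨n, hn, e⟩ := hx i
    refine ⟨c * n, hn, ?_⟩
    rw [mulVecQ_smul, e]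
    push_cast
    ring
  | k + 1, c, h => by
    obtain ⟨x, hx⟩ := Filter.Eventually.exists (f := (q : Filter ℕ+)) h
    exact Rq_entries A hq P k _ hx

lemma Rq_prod {q : Ultrafilter ℕ+} (P : Set ℕ+) : ∀ (m : ℕ) (u v : Fin m → ℕ)
    (A : ∀ i, Fin (u i) → Fin (v i) → ℚ) (_ : ∀ i, q ∈ ISet (A i))
    (S : Set ℕ+) (_ : S.Finite) (_ : ∀ a ∈ S, Rq q P m a),
    ∃ y : ∀ i, Fin (v i) → ℕ+, ∀ f : ∀ i, Fin (u i), ∀ a ∈ S, ∃ n ∈ P,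
      ((a : ℕ) : ℚ) * (∏ i, mulVecQ (A i) (y i) (f i)) = ((n : ℕ) : ℚ)
  | 0, _, _, _, _, S, _, h => ⟨fun i => i.elim0, fun f a ha => ⟨a, h a ha, by simp⟩⟩
  | m + 1, u, v, A, hA, S, hS, h => by
    have h1 : ∀ᶠ x in q, ∀ a ∈ S, Rq q P m (a * x) := (eventually_all_finite hS).mpr h
    obtain ⟨y0, hy0⟩ := hA 0 _ h1
    choose n hn e using hy0
    obtain ⟨y, hy⟩ := Rq_prod P m (fun i => u i.succ) (fun i => v i.succ)
      (fun i => A i.succ) (fun i => hA i.succ)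
      (Set.image2 (fun a i => a * n i) S Set.univ) (hS.image2 _ Set.finite_univ)
      (by
        rintro _ ⟨a, ha, i, -, rfl⟩
        exact hn i a ha)
    refine ⟨Fin.cons y0 y, fun f a ha => ?_⟩
    obtain ⟨k, hk, e2⟩ := hy (fun i => f i.succ) (a * n (f 0)) ⟨a, ha, f 0, trivial, rfl⟩
    refine ⟨k, hk, ?_⟩
    rw [← e2, Fin.prod_univ_succ]
    simp only [Fin.cons_zero, Fin.cons_succ]
    rw [e]
    push_cast
    ring

lemma galvin {q : Ultrafilter ℕ+} (hq : uadd q q = q) (W : ℕ → Set ℕ+) (hW : ∀ N, W N ∈ q) :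
    ∃ z : ℕ → ℕ+, ∀ F : Finset ℕ, ∀ n ∈ F, (∀ t ∈ F, n ≤ t) →
      ∃ s ∈ W (∏ t ∈ Finset.range n, (1 + (z t : ℕ))), (s : ℕ) = ∑ t ∈ F, (z t : ℕ) := by
  have key : ∀ X : Set ℕ+, X ∈ q → ∃ z ∈ X, {y | z + y ∈ X} ∈ q := by
    intro X hX
    have h2 : X ∈ uadd q q := by rw [hq]; exact hX
    rw [mem_uadd] at h2
    obtain ⟨z, hz1, hz2⟩ := (Filter.Eventually.and (f := (q : Filter ℕ+)) hX h2).exists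
    exact ⟨z, hz1, hz2⟩
  choose! g hg1 hg2 using key
  -- state: a pair (V, B)
  let X : Set ℕ+ × ℕ → Set ℕ+ := fun s => s.1 ∩ W s.2
  let step : Set ℕ+ × ℕ → Set ℕ+ × ℕ := fun s =>
    (X s ∩ {y | g (X s) + y ∈ X s}, s.2 * (1 + (g (X s) : ℕ)))
  let st : ℕ → Set ℕ+ × ℕ := fun n => Nat.rec (Set.univ, 1) (fun _ s => step s) n
  have st_succ : ∀ n, st (n + 1) = step (st n) := fun n => rfl
  have hst : ∀ n, (st n).1 ∈ q := by
    intro n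
    induction n with
    | zero => exact Filter.univ_mem
    | succ n ih =>
      rw [st_succ]
      have hX : X (st n) ∈ q := Filter.inter_mem ih (hW _)
      exact Filter.inter_mem hX (hg2 _ hX)
  have hX : ∀ n, X (st n) ∈ q := fun n => Filter.inter_mem (hst n) (hW _)
  let z : ℕ → ℕ+ := fun n => g (X (st n))
  have hB : ∀ n, (st n).2 = ∏ t ∈ Finset.range n, (1 + (z t : ℕ)) := by
    intro n
    induction n with
    | zero => rfl
    | succ n ih => rw [Finset.prod_range_succ, ← ih, st_succ]
  have hmono1 : ∀ n, X (st (n + 1)) ⊆ X (st n) := fun n y hy => hy.1.1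
  have hmono : Antitone fun n => X (st n) := antitone_nat_of_succ_le hmono1
  have main : ∀ c : ℕ, ∀ F : Finset ℕ, F.card = c → ∀ n ∈ F, (∀ t ∈ F, n ≤ t) →
      ∃ s ∈ X (st n), (s : ℕ) = ∑ t ∈ F, (z t : ℕ) := by
    intro c
    induction c with
    | zero =>
      intro F hF n hn
      rw [Finset.card_eq_zero] at hF
      simp [hF] at hn
    | succ c ih =>
      intro F hF n hn hmin
      have hc : (F.erase n).card = c := by rw [Finset.card_erase_of_mem hn, hF]; rfl
      have hsum := Finset.add_sum_erase F (fun t => (z t : ℕ)) hn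
      rcases (F.erase n).eq_empty_or_nonempty with h0 | h0
      · refine ⟨z n, hg1 _ (hX n), ?_⟩
        rw [← hsum, h0]
        simp
      · have hmem := Finset.min'_mem _ h0
        obtain ⟨s, hs, es⟩ := ih _ hc _ hmem (fun t ht => Finset.min'_le _ _ ht)
        have hlt : n + 1 ≤ (F.erase n).min' h0 := by
          have h1 := hmin _ (Finset.mem_of_mem_erase hmem)
          have h2 := Finset.ne_of_mem_erase hmem
          omega
        have hs' : s ∈ X (st (n + 1)) := hmono hlt hs
        refine ⟨z n + s, hs'.1.2, ?_⟩
        rw [← hsum, ← es]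
        rfl
  refine ⟨z, fun F n hn hmin => ?_⟩
  obtain ⟨s, hs, es⟩ := main _ F rfl n hn hmin
  refine ⟨s, ?_, es⟩
  rw [← hB]
  exact hs.2

lemma sum_le_prod_one_add (z : ℕ → ℕ+) (F : Finset ℕ) :
    ∑ t ∈ F, (z t : ℕ) ≤ ∏ t ∈ F, (1 + (z t : ℕ)) := by
  classical
  have : 1 + ∑ t ∈ F, (z t : ℕ) ≤ ∏ t ∈ F, (1 + (z t : ℕ)) := by
    induction F using Finset.induction_on with
    | empty => simp
    | insert a s ha ih =>
      rw [Finset.sum_insert ha, Finset.prod_insert ha]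
      nlinarith [Nat.zero_le (∑ t ∈ s, (z t : ℕ)), Nat.zero_le (z a : ℕ)]
  omega

lemma Rq_PS {q : Ultrafilter ℕ+} (hq : uadd q q = q) (P : Set ℕ+) (m : ℕ) (h : Rq q P m 1) :
    ∃ z : ℕ → ℕ+, PSm m z ⊆ P := by
  classical
  let W : ℕ → Set ℕ+ := fun N =>
    {x | ∀ j ∈ Set.Iio m, ∀ a ∈ {a : ℕ+ | (a : ℕ) ≤ N},
      Rq q P (j + 1) a → Rq q P j (a * x)}
  have hW : ∀ N, W N ∈ q := by
    intro N
    have hf : {a : ℕ+ | (a : ℕ) ≤ N}.Finite :=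
      Set.Finite.preimage (f := fun a : ℕ+ => (a : ℕ)) (PNat.coe_injective.injOn)
        (Set.finite_Iic N)
    change ∀ᶠ x in (q : Filter ℕ+), _
    refine (eventually_all_finite (Set.finite_Iio m)).mpr fun j _ =>
      (eventually_all_finite hf).mpr fun a _ => ?_
    by_cases hR : Rq q P (j + 1) a
    · have hR' : ∀ᶠ x in (q : Filter ℕ+), Rq q P j (a * x) := hR
      exact hR'.mono fun x hx _ => hx
    · exact Eventually.of_forall fun x hx => absurd hx hR
  obtain ⟨z, hz⟩ := galvin hq W hW
  refine ⟨z, ?_⟩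
  rintro w ⟨F, hne, hlt, hw⟩
  -- extend F to a function on ℕ
  have main : ∀ j : ℕ, j ≤ m → ∃ a : ℕ+, Rq q P (m - j) a ∧
      (a : ℕ) = ∏ i : Fin m with i.1 < j, ∑ t ∈ F i, (z t : ℕ) := by
    intro j
    induction j with
    | zero => intro _; exact ⟨1, h, by simp⟩
    | succ j ih =>
      intro hj
      obtain ⟨a, ha, ea⟩ := ih (by omega)
      let J : Fin m := ⟨j, hj⟩
      have hmem := Finset.min'_mem _ (hne J)
      obtain ⟨s, hs, es⟩ := hz (F J) _ hmem (fun t ht => Finset.min'_le _ _ ht)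
      have hfil : (Finset.univ.filter fun i : Fin m => i.1 < j + 1)
          = insert J (Finset.univ.filter fun i : Fin m => i.1 < j) := by
        ext i
        simp only [Finset.mem_filter, Finset.mem_univ, true_and, Finset.mem_insert, Fin.ext_iff, J]
        omega
      refine ⟨a * s, ?_, ?_⟩
      · have e1 : m - j = (m - (j + 1)) + 1 := by omega
        rw [e1] at ha
        refine hs (m - (j + 1)) (by simp only [Set.mem_Iio]; omega) a ?_ ha
        change (a : ℕ) ≤ _
        rw [ea]
        refine (Finset.prod_le_prod' fun i _ => sum_le_prod_one_add z (F i)).trans ?_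
        rw [← Finset.prod_biUnion]
        · refine Finset.prod_le_prod_of_subset_of_one_le' ?_ fun t _ _ => by omega
          intro t ht
          simp only [Finset.mem_biUnion, Finset.mem_filter, Finset.mem_univ, true_and] at ht
          obtain ⟨i, hi, hti⟩ := ht
          rw [Finset.mem_range]
          exact hlt i J hi t hti _ hmem
        · intro i _ k _ hik
          rw [Function.onFun, Finset.disjoint_left]
          intro t h1 h2
          rcases lt_or_gt_of_ne hik with h3 | h3
          · exact lt_irrefl _ (hlt _ _ h3 t h1 t h2)
          · exact lt_irrefl _ (hlt _ _ h3 t h2 t h1)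
      · rw [hfil, Finset.prod_insert (by simp [J]), ← ea, ← es, PNat.mul_coe, mul_comm]
  obtain ⟨a, ha, ea⟩ := main m le_rfl
  rw [Nat.sub_self] at ha
  have : w = a := by
    apply PNat.coe_injective
    rw [hw, ea]
    simp
  rw [this]
  exact ha

end helpers

/-- Theorem 3.17: let `ℕ = E_1 ∪ … ∪ E_r` and let
`A 0, …, A (m-1)` be finite image partition regular matrices over `(ℕ,+)`.
Then there are `k`, vectors `x i, y i ∈ ℕ^{v i}` and a sequence `{z_t}` in `ℕ`
such that all entries of each `A i (x i)` lie in `E_k`,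
`P(A 0 (y 0), …, A (m-1) (y (m-1))) ⊆ E_k`, and `PS_m({z_t}) ⊆ E_k`. -/
theorem stmt_19 (r m : ℕ) (hm : 0 < m) (u v : Fin m → ℕ)
    (A : ∀ i, Fin (u i) → Fin (v i) → ℚ) (hA : ∀ i, IPR (A i))
    (E : Fin r → Set ℕ+) (hE : ∀ n : ℕ+, ∃ i, n ∈ E i) :
    ∃ (k : Fin r) (x y : ∀ i, Fin (v i) → ℕ+) (z : ℕ → ℕ+),
      (∀ i, entriesIn (mulVecQ (A i) (x i)) (E k)) ∧
      (∀ f : ∀ i, Fin (u i), ∃ n ∈ E k,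
        (∏ i, mulVecQ (A i) (y i) (f i)) = ((n : ℕ) : ℚ)) ∧
      PSm m z ⊆ E k := by
  obtain ⟨q, hqI, hq⟩ := exists_uidem m u v A hA
  obtain ⟨k, hk⟩ := Rq_color q E hE m 1
  obtain ⟨y, hy⟩ := Rq_prod (E k) m u v A hqI {1} (Set.finite_singleton 1)
    (by rintro a rfl; exact hk)
  obtain ⟨z, hz⟩ := Rq_PS hq (E k) m hk
  have hx : ∀ i, ∃ x : Fin (v i) → ℕ+, entriesIn (mulVecQ (A i) x) (E k) := fun i =>
    Rq_entries (A i) (hqI i) (E k) (m - 1) 1 (by rwa [Nat.sub_add_cancel hm])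
  choose x hx using hx
  refine ⟨k, x, y, z, hx, fun f => ?_, hz⟩
  obtain ⟨n, hn, e⟩ := hy f 1 rfl
  exact ⟨n, hn, by simpa using e⟩
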